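/- Let E₀ > 0, δ > 0, k > −1, m > −1 with k + m + 1 > 0, and let φ : (0,∞) → [0,∞) be measurable with φ(E) = 0 for E ≥ E₀ and φ(E) = E(E₀² − E²)₊^k + E · O((E₀² − E²)₊^{k+δ}) as E → E₀−. Then h_m(u) = ∫_u^{E₀} φ(E)(E² − u²)^m dE satisfies h_m(u) = ½ c_{k,m} (E₀² − u²)^{k+m+1} + O((E₀² − u²)^{k+m+δ+1}) as u → E₀− with 0 < u < E₀, where c_{k,m} = ∫₀¹ s^k (1−s)^m ds. -/

import Mathlib

open MeasureTheory Real Set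

/-- The real Beta integrand is integrable on the open unit interval. -/
theorem integrableOn_rpow_mul_one_sub_rpow {a b : ℝ} (ha : -1 < a) (hb : -1 < b) :
    IntegrableOn (fun s : ℝ => s ^ a * (1 - s) ^ b) (Ioo 0 1) := by
  have h := Complex.betaIntegral_convergent (u := ((a + 1 : ℝ) : ℂ)) (v := ((b + 1 : ℝ) : ℂ))
    (by rw [Complex.ofReal_re]; linarith) (by rw [Complex.ofReal_re]; linarith)
  rw [intervalIntegrable_iff_integrableOn_Ioo_of_le zero_le_one] at h
  refine (Integrable.norm h).congr ?_
  filter_upwards [ae_restrict_mem measurableSet_Ioo] with s hs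
  have hs' : (1 : ℂ) - (s : ℂ) = ((1 - s : ℝ) : ℂ) := by push_cast; ring
  rw [norm_mul, hs', Complex.norm_cpow_eq_rpow_re_of_pos hs.1,
    Complex.norm_cpow_eq_rpow_re_of_pos (sub_pos.2 hs.2)]
  simp

/-- The substitution `s = (v² - x²) / (v² - u²)` maps `(u, v)` onto `(0, 1)`. -/
theorem image_sq_sub_sq_div_Ioo {u v : ℝ} (hu : 0 < u) (huv : u < v) :
    (fun x : ℝ => (v ^ 2 - x ^ 2) / (v ^ 2 - u ^ 2)) '' Ioo u v = Ioo 0 1 := by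
  have hD : 0 < v ^ 2 - u ^ 2 := by nlinarith
  ext s
  constructor
  · rintro ⟨x, ⟨hux, hxv⟩, rfl⟩
    exact ⟨div_pos (by nlinarith) hD, (div_lt_one hD).2 (by nlinarith)⟩
  · rintro ⟨hs0, hs1⟩
    have hpos : 0 < v ^ 2 - s * (v ^ 2 - u ^ 2) := by nlinarith [sq_nonneg u]
    refine ⟨√(v ^ 2 - s * (v ^ 2 - u ^ 2)), ⟨?_, ?_⟩, ?_⟩
    · exact Real.lt_sqrt_of_sq_lt (by nlinarith)
    · exact (Real.sqrt_lt' (hu.trans huv)).2 (by nlinarith)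
    · simp only [Real.sq_sqrt hpos.le]
      field_simp
      ring

/-- The integrand obtained from the Beta integrand under `s = (v² - x²) / (v² - u²)`. -/
theorem abs_deriv_smul_beta_integrand {a b u v x : ℝ} (hu : 0 < u) (hx : x ∈ Ioo u v) :
    |-(2 * x) / (v ^ 2 - u ^ 2)| • (((v ^ 2 - x ^ 2) / (v ^ 2 - u ^ 2)) ^ a *
        (1 - (v ^ 2 - x ^ 2) / (v ^ 2 - u ^ 2)) ^ b) =
      2 / (v ^ 2 - u ^ 2) ^ (a + b + 1) *
        (x * (v ^ 2 - x ^ 2) ^ a * (x ^ 2 - u ^ 2) ^ b) := by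
  obtain ⟨hux, hxv⟩ := hx
  have hD : 0 < v ^ 2 - u ^ 2 := by nlinarith
  have h1 : 0 < v ^ 2 - x ^ 2 := by nlinarith
  have h2 : 0 < x ^ 2 - u ^ 2 := by nlinarith
  have h3 : 1 - (v ^ 2 - x ^ 2) / (v ^ 2 - u ^ 2) = (x ^ 2 - u ^ 2) / (v ^ 2 - u ^ 2) := by
    field_simp
    ring
  rw [h3, Real.div_rpow h1.le hD.le, Real.div_rpow h2.le hD.le, abs_div, abs_neg,
    abs_of_pos hD, abs_of_pos (by linarith), Real.rpow_add hD, Real.rpow_add hD,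
    Real.rpow_one, smul_eq_mul]
  have := Real.rpow_pos_of_pos hD a
  have := Real.rpow_pos_of_pos hD b
  field_simp

/-- The Beta integral in the variable `x`, where `s = (v² - x²) / (v² - u²)`. -/
theorem beta_integral_sq_substitution {a b u v : ℝ} (ha : -1 < a) (hb : -1 < b)
    (hu : 0 < u) (huv : u < v) :
    IntegrableOn (fun x : ℝ => x * (v ^ 2 - x ^ 2) ^ a * (x ^ 2 - u ^ 2) ^ b) (Ioo u v) ∧
      ∫ x in Ioo u v, x * (v ^ 2 - x ^ 2) ^ a * (x ^ 2 - u ^ 2) ^ b =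
        1 / 2 * (∫ s in (0 : ℝ)..1, s ^ a * (1 - s) ^ b) *
          (v ^ 2 - u ^ 2) ^ (a + b + 1) := by
  have hD : 0 < v ^ 2 - u ^ 2 := by nlinarith
  have hDpow : 0 < (v ^ 2 - u ^ 2) ^ (a + b + 1) := Real.rpow_pos_of_pos hD _
  have hderiv : ∀ x ∈ Ioo u v, HasDerivWithinAt
      (fun x : ℝ => (v ^ 2 - x ^ 2) / (v ^ 2 - u ^ 2)) (-(2 * x) / (v ^ 2 - u ^ 2))
      (Ioo u v) x := by
    intro x _
    have h := ((hasDerivAt_pow 2 x).const_sub (v ^ 2)).div_const (v ^ 2 - u ^ 2)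
    simpa using h.hasDerivWithinAt
  have hinj : InjOn (fun x : ℝ => (v ^ 2 - x ^ 2) / (v ^ 2 - u ^ 2)) (Ioo u v) := by
    intro x hx y hy hxy
    have h := (div_left_inj' hD.ne').1 hxy
    exact (sq_eq_sq₀ (hu.trans hx.1).le (hu.trans hy.1).le).1 (by linarith)
  have hint := (integrableOn_image_iff_integrableOn_abs_deriv_smul measurableSet_Ioo hderiv hinj
    (fun s : ℝ => s ^ a * (1 - s) ^ b)).1
    (by rw [image_sq_sub_sq_div_Ioo hu huv]; exact integrableOn_rpow_mul_one_sub_rpow ha hb)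
  have heq := integral_image_eq_integral_abs_deriv_smul measurableSet_Ioo hderiv hinj
    (fun s : ℝ => s ^ a * (1 - s) ^ b)
  rw [integrableOn_congr_fun (fun x hx => abs_deriv_smul_beta_integrand hu hx)
    measurableSet_Ioo] at hint
  rw [image_sq_sub_sq_div_Ioo hu huv,
    setIntegral_congr_fun measurableSet_Ioo (fun x hx => abs_deriv_smul_beta_integrand hu hx),
    integral_const_mul] at heq
  constructor
  · refine (hint.const_mul ((v ^ 2 - u ^ 2) ^ (a + b + 1) / 2)).congr (.of_forall fun x => ?_)
    field_simp
  · rw [intervalIntegral.integral_of_le zero_le_one, integral_Ioc_eq_integral_Ioo, heq]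
    field_simp

theorem hm_asymptotics
    (E₀ δ k m : ℝ) (hE₀ : 0 < E₀) (hδ : 0 < δ) (hk : -1 < k) (hm : -1 < m)
    (hkm : 0 < k + m + 1)
    (φ : ℝ → ℝ) (hmeas : Measurable φ)
    (hnonneg : ∀ E, 0 < E → 0 ≤ φ E)
    (hvanish : ∀ E, E₀ ≤ E → φ E = 0)
    (hasymp : ∃ C ε : ℝ, 0 < ε ∧ ∀ E, 0 < E → E₀ - ε < E →
      |φ E - E * (max (E₀ ^ 2 - E ^ 2) 0) ^ k| ≤
        C * E * (max (E₀ ^ 2 - E ^ 2) 0) ^ (k + δ)) :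
    ∃ C ε : ℝ, 0 < ε ∧ ∀ u, 0 < u → E₀ - ε < u → u < E₀ →
      |(∫ E in u..E₀, φ E * (E ^ 2 - u ^ 2) ^ m) -
          1 / 2 * (∫ s in (0:ℝ)..1, s ^ k * (1 - s) ^ m) *
            (E₀ ^ 2 - u ^ 2) ^ (k + m + 1)| ≤
        C * (E₀ ^ 2 - u ^ 2) ^ (k + m + δ + 1) := by
  obtain ⟨C, ε, hε, hC⟩ := hasymp
  refine ⟨C * (1 / 2 * ∫ s in (0:ℝ)..1, s ^ (k + δ) * (1 - s) ^ m), ε, hε,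
    fun u hu hεu huE => ?_⟩
  obtain ⟨hint, heq⟩ := beta_integral_sq_substitution hk hm hu huE
  obtain ⟨hintδ, heqδ⟩ :=
    beta_integral_sq_substitution (show -1 < k + δ by linarith) hm hu huE
  have hbound : ∀ E ∈ Ioo u E₀,
      ‖φ E * (E ^ 2 - u ^ 2) ^ m - E * (E₀ ^ 2 - E ^ 2) ^ k * (E ^ 2 - u ^ 2) ^ m‖ ≤
        C * (E * (E₀ ^ 2 - E ^ 2) ^ (k + δ) * (E ^ 2 - u ^ 2) ^ m) := by
    rintro E ⟨huE', hEE⟩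
    have hE := hC E (hu.trans huE') (hεu.trans huE')
    rw [max_eq_left (by nlinarith)] at hE
    have hpow : 0 ≤ (E ^ 2 - u ^ 2) ^ m := Real.rpow_nonneg (by nlinarith) m
    rw [← sub_mul, norm_mul, Real.norm_of_nonneg hpow, Real.norm_eq_abs]
    calc _ ≤ C * E * (E₀ ^ 2 - E ^ 2) ^ (k + δ) * (E ^ 2 - u ^ 2) ^ m := by gcongr
      _ = _ := by ring
  have hae := (ae_restrict_iff' (μ := volume) measurableSet_Ioo).2 (.of_forall hbound)
  have hdiff : IntegrableOn (fun E => φ E * (E ^ 2 - u ^ 2) ^ m -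
      E * (E₀ ^ 2 - E ^ 2) ^ k * (E ^ 2 - u ^ 2) ^ m) (Ioo u E₀) :=
    (hintδ.const_mul C).mono' (by fun_prop) hae
  have hφ : IntegrableOn (fun E => φ E * (E ^ 2 - u ^ 2) ^ m) (Ioo u E₀) :=
    (hdiff.add hint).congr (.of_forall fun E => by simp)
  rw [intervalIntegral.integral_of_le huE.le, integral_Ioc_eq_integral_Ioo, ← heq,
    ← integral_sub hφ hint, ← Real.norm_eq_abs]
  refine (norm_integral_le_of_norm_le (hintδ.const_mul C) hae).trans (le_of_eq ?_)
  rw [integral_const_mul, heqδ, show k + δ + m + 1 = k + m + δ + 1 by ring]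
  ring
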